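/- Let d, m, p be integers with 0 ≤ p < m ≤ p + d, let r₀ > 0, and set W = [−r₀, r₀]^p × {0}^{m−p} ⊂ ℝ^m. For every modulus of continuity β there exists a continuous function g : [0,1]^d → ℝ^m admitting β as a modulus of continuity such that for every ε with 0 < ε ≤ min{ (1/(2√(m−p))) · β(2^{−5}), r₀ }, N^g_W(ε) ≥ (16 / Ψ_β(2√(m−p) · ε))^{m−p} · 2^{−4(m−p)·√(|log₂ Ψ_β(2√(m−p) · ε)|)}. -/

import Mathlib

open MeasureTheory ENNReal

noncomputable section

/-- The closed unit cube `[0,1]^d` in `ℝ^d`. -/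
def unitCube (d : ℕ) : Set (EuclideanSpace ℝ (Fin d)) :=
  {x | ∀ i, x i ∈ Set.Icc (0 : ℝ) 1}

/-- `N^f_W(ε)`: the infimum of the `sdim`-dimensional Hausdorff measure of
`Z^h_W = {x ∈ [0,1]^d : h x ∈ W}` over all continuous `h` with `‖h - f‖_{C⁰} ≤ ε`. -/
def NW (d m : ℕ) (sdim : ℝ) (W : Set (EuclideanSpace ℝ (Fin m)))
    (f : EuclideanSpace ℝ (Fin d) → EuclideanSpace ℝ (Fin m)) (ε : ℝ) : ℝ≥0∞ :=
  ⨅ (h : EuclideanSpace ℝ (Fin d) → EuclideanSpace ℝ (Fin m))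
    (_ : ContinuousOn h (unitCube d))
    (_ : ∀ x ∈ unitCube d, dist (h x) (f x) ≤ ε),
    μH[sdim] {x ∈ unitCube d | h x ∈ W}

/-- `β : [0,∞) → [0,∞)` is a modulus of continuity: increasing, subadditive,
`β 0 = 0` and `β(δ) → 0` as `δ → 0+`. -/
def IsModulus (β : ℝ → ℝ) : Prop :=
  (∀ s, 0 ≤ s → 0 ≤ β s) ∧
  MonotoneOn β (Set.Ici 0) ∧
  (∀ s t : ℝ, 0 ≤ s → 0 ≤ t → β (s + t) ≤ β s + β t) ∧
  β 0 = 0 ∧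
  Filter.Tendsto β (nhdsWithin 0 (Set.Ioi 0)) (nhds 0)

/-- `Ψ_β(s) = sup {δ ≥ 0 : β δ ≤ s}`. -/
def Psi (β : ℝ → ℝ) (s : ℝ) : ℝ :=
  sSup {δ : ℝ | 0 ≤ δ ∧ β δ ≤ s}

/-- The box `[-r₀, r₀]^p × {0}^{m-p}` in `ℝ^m`. -/
def boxSlice (m p : ℕ) (r₀ : ℝ) : Set (EuclideanSpace ℝ (Fin m)) :=
  {y | ∀ i : Fin m, ((i : ℕ) < p → |y i| ≤ r₀) ∧ (p ≤ (i : ℕ) → y i = 0)}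

/-! Let `k = m - p` and `b = β / √k`. A function `φ : ℝ → ℝ` with modulus of continuity `b` can
oscillate `2 ^ ((j + 2) ^ 2)` times between `± b (δ j) / 2` over disjoint intervals of length `δ j`,
for all `j` at once, provided that these lengths decrease so fast that all blocks of intervals fit
into `[0, 1]`: McShane's formula extends the prescribed values. Take `g = (0, …, 0, φ x₁, …, φ xₖ)`.
For given `ε` choose `j` minimal with `δ (j + 1) ≤ Ψ_β(2√k ε)`; then `2√k ε ≤ β (δ j)`. Each product
of `k` intervals of block `j` is the base of a box in `[0, 1] ^ d`, and on every `k`-dimensional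
slice of the box parallel to its base the last `k` components of an `ε`-perturbation of `g` satisfy
the sign conditions of the Poincaré–Miranda theorem. Hence the zeros in the box project onto
`[0, 1] ^ (d - k)`, and each of the `(2 ^ ((j + 2) ^ 2)) ^ k` disjoint boxes contributes measure at
least `1`. With `δ (j + 1) = 2 ^ (-(j + 4) ^ 2)` and `Ψ = 2 ^ (-t)`, so that `√t ≤ j + 4`, the bound
of the theorem is `(2 ^ ((√t - 2) ^ 2)) ^ k`.

The Poincaré–Miranda theorem is proved on a grid, with signs of the components as `0`-cochains
modulo `2`: the cup product of their coboundaries sums to `1` over the triangulated grid by Stokes'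
theorem, whereas it vanishes on any cell on which some component has constant sign. -/

/-! ### Cochains modulo two -/

namespace ListCochain

variable {α α' R : Type*} [CommRing R]

/-- The coboundary of a cochain `ω`, viewed as a function on ordered lists of vertices. Signs are
omitted, as it is used only in characteristic two. -/
def coboundary : (List α → R) →ₗ[R] (List α → R) :=
  LinearMap.pi fun w => ∑ i ∈ Finset.range w.length, LinearMap.proj (w.eraseIdx i)

/-- The prism operator of the homotopy from `lo` to `hi`: it sums `ω` over the simplices
`[lo a₀, …, lo aᵢ, hi aᵢ, …, hi aₙ]` triangulating the prism over `[a₀, …, aₙ]`. -/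
def prism (lo hi : α → α') : (List α' → R) →ₗ[R] (List α → R) :=
  LinearMap.pi fun w => ∑ i ∈ Finset.range w.length,
    LinearMap.proj ((w.take (i + 1)).map lo ++ (w.drop i).map hi)

/-- The product `f · ω` of a `0`-cochain and a cochain: `f` is evaluated at the first vertex. -/
def headMul (f : α → R) (ω : List α → R) : List α → R
  | [] => 0
  | a :: w => f a * ω (a :: w)

/-- The cup product of the coboundaries of `f 0, …, f (k - 1)`, in reverse order; for `k = 0` it is
the unit `0`-cochain. -/
def cupCoboundary (f : ℕ → α → R) : ℕ → List α → R
  | 0 => coboundary fun w => if w.isEmpty then 1 else 0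
  | k + 1 => coboundary (headMul (f k) (cupCoboundary f k))

lemma coboundary_apply (ω : List α → R) (w : List α) :
    coboundary ω w = ∑ i ∈ Finset.range w.length, ω (w.eraseIdx i) := by
  simp [coboundary]

lemma coboundary_cons (ω : List α → R) (a : α) (w : List α) :
    coboundary ω (a :: w) = ω w + coboundary (fun u => ω (a :: u)) w := by
  simp [coboundary_apply, Finset.sum_range_succ', add_comm]

lemma coboundary_comp_map (φ : α → α') (ω : List α' → R) (w : List α) :
    coboundary (fun u => ω (u.map φ)) w = coboundary ω (w.map φ) := by
  simp [coboundary_apply, List.eraseIdx_map]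

lemma coboundary_congr {ω η : List α → R} {w : List α} (h : ∀ u ⊆ w, ω u = η u) :
    coboundary ω w = coboundary η w := by
  simp only [coboundary_apply]
  exact Finset.sum_congr rfl fun i _ => h _ (w.eraseIdx_subset)

lemma prism_apply (lo hi : α → α') (ω : List α' → R) (w : List α) :
    prism lo hi ω w =
      ∑ i ∈ Finset.range w.length, ω ((w.take (i + 1)).map lo ++ (w.drop i).map hi) := by
  simp [prism]

lemma prism_cons (lo hi : α → α') (ω : List α' → R) (a : α) (w : List α) :
    prism lo hi ω (a :: w) =
      ω (lo a :: hi a :: w.map hi) + prism lo hi (fun u => ω (lo a :: u)) w := by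
  simp [prism_apply, Finset.sum_range_succ', add_comm]

lemma prism_eq_zero {lo hi : α → α'} {ω : List α' → R} {w : List α}
    (h : ∀ u ⊆ w.map lo ++ w.map hi, ω u = 0) : prism lo hi ω w = 0 := by
  rw [prism_apply]
  refine Finset.sum_eq_zero fun i _ => h _ (List.append_subset.2 ⟨?_, ?_⟩)
  · exact List.subset_append_of_subset_left _ (List.map_subset _ (List.take_subset _ _))
  · exact List.subset_append_of_subset_right _ (List.map_subset _ (List.drop_subset _ _))

lemma cupCoboundary_nil (f : ℕ → α → R) (k : ℕ) : cupCoboundary f k [] = 0 := by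
  cases k <;> simp [cupCoboundary, coboundary_apply]

lemma cupCoboundary_comp_map (φ : α → α') (f : ℕ → α' → R) (k : ℕ) (w : List α) :
    cupCoboundary f k (w.map φ) = cupCoboundary (fun q x => f q (φ x)) k w := by
  induction k generalizing w with
  | zero =>
    simp only [cupCoboundary]
    rw [← coboundary_comp_map]
    simp only [List.isEmpty_map]
  | succ k ih =>
    simp only [cupCoboundary]
    rw [← coboundary_comp_map]
    refine coboundary_congr fun u _ => ?_
    cases u with
    | nil => rfl
    | cons a u => simp only [List.map_cons, headMul, ← ih]

section CharTwo

variable [CharP R 2]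

lemma coboundary_coboundary (ω : List α → R) : coboundary (coboundary ω) = 0 := by
  funext w
  induction w generalizing ω with
  | nil => simp [coboundary_apply]
  | cons a w ih =>
    have hcons : (fun u => coboundary ω (a :: u)) = ω + coboundary fun u => ω (a :: u) :=
      funext fun u => coboundary_cons ω a u
    rw [coboundary_cons, hcons, map_add, Pi.add_apply, ih, Pi.zero_apply, Pi.zero_apply, add_zero,
      CharTwo.add_self_eq_zero]

lemma prism_coboundary (lo hi : α → α') (ω : List α' → R) :
    prism lo hi (coboundary ω) =
      coboundary (prism lo hi ω) + (fun w => ω (w.map hi)) + fun w => ω (w.map lo) := by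
  funext w
  induction w generalizing ω with
  | nil => simp [prism_apply, coboundary_apply, CharTwo.add_self_eq_zero]
  | cons a w ih =>
    have hlo : (fun u => coboundary ω (lo a :: u)) = ω + coboundary fun u => ω (lo a :: u) :=
      funext fun u => coboundary_cons ω (lo a) u
    have hprism : (fun u => prism lo hi ω (a :: u)) =
        (fun u => ω (lo a :: hi a :: u.map hi)) + prism lo hi fun u => ω (lo a :: u) :=
      funext fun u => prism_cons lo hi ω a u
    have hhead := coboundary_comp_map hi (fun u => ω (lo a :: hi a :: u)) w
    rw [prism_cons, hlo, map_add, Pi.add_apply, ih]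
    simp only [Pi.add_apply, coboundary_cons, hprism, map_add, hhead, List.map_cons]
    linear_combination CharTwo.add_self_eq_zero (ω (lo a :: w.map hi))

lemma coboundary_cupCoboundary (f : ℕ → α → R) (k : ℕ) :
    coboundary (cupCoboundary f k) = 0 := by
  cases k <;> exact coboundary_coboundary _

lemma cupCoboundary_eq_zero_of_const {f : ℕ → α → R} {k q : ℕ} (hq : q < k) {c : R} {w : List α}
    (hw : ∀ a ∈ w, f q a = c) : cupCoboundary f k w = 0 := by
  induction k generalizing w with
  | zero => omega
  | succ k ih =>
    rcases Nat.lt_succ_iff_lt_or_eq.1 hq with hqk | rfl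
    · have hzero : ∀ u ⊆ w, headMul (f k) (cupCoboundary f k) u = (0 : List α → R) u := by
        rintro (_ | ⟨a, u⟩) hu
        · rfl
        · rw [headMul, ih hqk fun b hb => hw b (hu hb), mul_zero, Pi.zero_apply]
      rw [cupCoboundary, coboundary_congr hzero, map_zero, Pi.zero_apply]
    · have hconst : ∀ u ⊆ w, headMul (f q) (cupCoboundary f q) u = (c • cupCoboundary f q) u := by
        rintro (_ | ⟨a, u⟩) hu
        · simp [headMul, cupCoboundary_nil]
        · rw [headMul, hw a (hu List.mem_cons_self), Pi.smul_apply, smul_eq_mul]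
      rw [cupCoboundary, coboundary_congr hconst, map_smul, coboundary_cupCoboundary, smul_zero,
        Pi.zero_apply]

end CharTwo

variable {N k : ℕ}

/-- Replaces the `k`-th coordinate of a lattice point by `s`. -/
abbrev slice (k s : ℕ) (a : ℕ → ℕ) : ℕ → ℕ := Function.update a k s

/-- The sum of a cochain over a triangulation of the grid `{0, …, N}ᵏ × {0}`: the segments of the
`k`-th coordinate axis are multiplied onto the triangulation of the `(k - 1)`-dimensional grid by
prism operators. -/
def gridSum (N : ℕ) : ℕ → (List (ℕ → ℕ) → R) →ₗ[R] R
  | 0 => LinearMap.proj [0]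
  | k + 1 => ∑ s ∈ Finset.range N, gridSum N k ∘ₗ prism (slice k s) (slice k (s + 1))

/-- All vertices lie in one and the same face `{x q = 0}` or `{x q = N}`, `q < k`, of the grid. -/
def OnSide (N k : ℕ) (w : List (ℕ → ℕ)) : Prop :=
  ∃ q < k, (∀ a ∈ w, a q = 0) ∨ ∀ a ∈ w, a q = N

lemma gridSum_succ (ω : List (ℕ → ℕ) → R) :
    gridSum N (k + 1) ω =
      ∑ s ∈ Finset.range N, gridSum N k (prism (slice k s) (slice k (s + 1)) ω) := by
  simp [gridSum]

lemma gridSum_eq_zero_of_cell {ω : List (ℕ → ℕ) → R}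
    (h : ∀ w, (∃ c, ∀ a ∈ w, a ∈ Set.Icc c (c + 1)) → ω w = 0) : gridSum N k ω = 0 := by
  induction k generalizing ω with
  | zero => exact h _ ⟨0, by simp [Set.mem_Icc, Pi.le_def]⟩
  | succ k ih =>
    rw [gridSum_succ]
    refine Finset.sum_eq_zero fun s _ => ih ?_
    rintro w ⟨c, hc⟩
    refine prism_eq_zero fun u hu => h u ⟨slice k s c, fun x hx => ?_⟩
    have hcell : ∀ a ∈ w, ∀ q, c q ≤ a q ∧ a q ≤ c q + 1 := fun a ha q =>
      ⟨(hc a ha).1 q, (hc a ha).2 q⟩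
    rcases List.mem_append.1 (hu hx) with hx | hx <;> obtain ⟨a, ha, rfl⟩ := List.mem_map.1 hx <;>
      refine ⟨fun q => ?_, fun q => ?_⟩ <;> by_cases hq : q = k <;>
      simp [slice, hq, hcell a ha q]

lemma OnSide.prism {w u : List (ℕ → ℕ)} {s t : ℕ} (hw : OnSide N k w)
    (hu : u ⊆ w.map (slice k s) ++ w.map (slice k t)) : OnSide N k u := by
  obtain ⟨q, hq, hw⟩ := hw
  have hcoord : ∀ x ∈ u, ∃ a ∈ w, x q = a q := by
    intro x hx
    rcases List.mem_append.1 (hu hx) with hx | hx <;> obtain ⟨a, ha, rfl⟩ := List.mem_map.1 hx <;>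
      exact ⟨a, ha, Function.update_of_ne hq.ne _ _⟩
  refine ⟨q, hq, hw.imp (fun hw x hx => ?_) fun hw x hx => ?_⟩ <;>
    obtain ⟨a, ha, hxa⟩ := hcoord x hx <;> rw [hxa, hw a ha]

section CharTwo

variable [CharP R 2]

lemma gridSum_succ_coboundary_of_prism {ω : List (ℕ → ℕ) → R}
    (h : ∀ s, gridSum N k (coboundary (prism (slice k s) (slice k (s + 1)) ω)) = 0) :
    gridSum N (k + 1) (coboundary ω) =
      gridSum N k (fun w => ω (w.map (slice k N))) +
        gridSum N k (fun w => ω (w.map (slice k 0))) := by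
  simp only [gridSum_succ, prism_coboundary, map_add, h, zero_add]
  simp only [← CharTwo.sub_eq_add]
  exact Finset.sum_range_sub (fun s => gridSum N k fun w => ω (w.map (slice k s))) N

lemma gridSum_coboundary_eq_zero {ω : List (ℕ → ℕ) → R} (hnil : ω [] = 0)
    (h : ∀ w, OnSide N k w → ω w = 0) : gridSum N k (coboundary ω) = 0 := by
  induction k generalizing ω with
  | zero => simp [gridSum, coboundary_apply, hnil]
  | succ k ih =>
    have hface : ∀ s, s = 0 ∨ s = N →
        (fun w : List (ℕ → ℕ) => ω (w.map (slice k s))) = 0 := fun s hs =>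
      funext fun w => h _ ⟨k, k.lt_succ_self, by rcases hs with rfl | rfl <;> simp⟩
    rw [gridSum_succ_coboundary_of_prism, hface N (.inr rfl), hface 0 (.inl rfl), map_zero,
      add_zero]
    refine fun s => ih (by simp [prism_apply]) fun w hw => prism_eq_zero fun u hu => h u ?_
    obtain ⟨q, hq, hside⟩ := hw.prism hu
    exact ⟨q, hq.trans k.lt_succ_self, hside⟩

lemma gridSum_succ_coboundary {ω : List (ℕ → ℕ) → R} (h : ∀ w, OnSide N k w → ω w = 0) :
    gridSum N (k + 1) (coboundary ω) =
      gridSum N k (fun w => ω (w.map (slice k N))) +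
        gridSum N k (fun w => ω (w.map (slice k 0))) :=
  gridSum_succ_coboundary_of_prism fun s => gridSum_coboundary_eq_zero (by simp [prism_apply])
    fun _ hw => prism_eq_zero fun _ hu => h _ (hw.prism hu)

lemma gridSum_cupCoboundary {f : ℕ → (ℕ → ℕ) → R} (h0 : ∀ q < k, ∀ x, x q = 0 → f q x = 0)
    (h1 : ∀ q < k, ∀ x, x q = N → f q x = 1) : gridSum N k (cupCoboundary f k) = 1 := by
  induction k generalizing f with
  | zero => simp [gridSum, cupCoboundary, coboundary_apply]
  | succ k ih =>
    have hside : ∀ w, OnSide N k w → headMul (f k) (cupCoboundary f k) w = 0 := by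
      rintro (_ | ⟨a, w⟩) ⟨q, hq, hw⟩
      · rfl
      · have hcup : cupCoboundary f k (a :: w) = 0 := by
          rcases hw with hw | hw
          · exact cupCoboundary_eq_zero_of_const hq fun b hb => h0 q (by omega) b (hw b hb)
          · exact cupCoboundary_eq_zero_of_const hq fun b hb => h1 q (by omega) b (hw b hb)
        rw [headMul, hcup, mul_zero]
    have hbottom :
        (fun w : List (ℕ → ℕ) => headMul (f k) (cupCoboundary f k) (w.map (slice k 0))) = 0 := by
      funext w
      cases w with
      | nil => rfl
      | cons a w => simp [headMul, h0]
    have htop :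
        (fun w : List (ℕ → ℕ) => headMul (f k) (cupCoboundary f k) (w.map (slice k N))) =
          cupCoboundary (fun q x => f q (slice k N x)) k := by
      funext w
      rw [← cupCoboundary_comp_map]
      cases w with
      | nil => simp [headMul, cupCoboundary_nil]
      | cons a w => simp [headMul, h1]
    rw [cupCoboundary, gridSum_succ_coboundary hside, hbottom, htop, map_zero, add_zero]
    refine ih (fun q hq x hx => h0 q (by omega) _ ?_) fun q hq x hx => h1 q (by omega) _ ?_ <;>
      rwa [slice, Function.update_of_ne hq.ne]

end CharTwo

end ListCochain

theorem exists_cell_forall_exists_and_exists_not {ι : Type*} [Finite ι] {N : ℕ}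
    {P : ι → (ι → ℕ) → Prop} (h0 : ∀ i x, x i = 0 → P i x) (h1 : ∀ i x, x i = N → ¬P i x) :
    ∃ c : ι → ℕ, ∀ i, (∃ a ∈ Set.Icc c (c + 1), P i a) ∧ ∃ b ∈ Set.Icc c (c + 1), ¬P i b := by
  classical
  obtain ⟨k, ⟨e⟩⟩ := Finite.exists_equiv_fin ι
  let restrict (x : ℕ → ℕ) (i : ι) : ℕ := x (e i)
  let f (q : ℕ) (x : ℕ → ℕ) : ZMod 2 :=
    if ∃ i, (e i : ℕ) = q ∧ ¬P i (restrict x) then 1 else 0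
  have hf : ∀ i x, f (e i) x = if P i (restrict x) then 0 else 1 := by
    intro i x
    have hiff : (∃ i', (e i' : ℕ) = e i ∧ ¬P i' (restrict x)) ↔ ¬P i (restrict x) := by
      simp [Fin.val_inj]
    simp only [f, hiff, ite_not]
  have hsum : ListCochain.gridSum N k (ListCochain.cupCoboundary f k) = 1 := by
    refine ListCochain.gridSum_cupCoboundary (fun q hq x hx => ?_) fun q hq x hx => ?_ <;>
      obtain ⟨i, hi⟩ := e.surjective ⟨q, hq⟩ <;> obtain rfl : (e i : ℕ) = q := by rw [hi]
    · rw [hf, if_pos (h0 i _ hx)]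
    · rw [hf, if_neg (h1 i _ hx)]
  by_contra! hcon
  refine zero_ne_one (hsum.symm.trans (ListCochain.gridSum_eq_zero_of_cell ?_)).symm
  rintro w ⟨c, hc⟩
  obtain ⟨i, hi⟩ := hcon (restrict c)
  have hcell : ∀ a ∈ w, restrict a ∈ Set.Icc (restrict c) (restrict c + 1) := fun a ha =>
    ⟨fun i => (hc a ha).1 (e i), fun i => (hc a ha).2 (e i)⟩
  by_cases hP : ∃ a ∈ w, P i (restrict a)
  · obtain ⟨a, ha, hPa⟩ := hP
    refine ListCochain.cupCoboundary_eq_zero_of_const (e i).2 (c := 0) fun b hb => ?_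
    rw [hf, if_pos (hi ⟨_, hcell a ha, hPa⟩ _ (hcell b hb))]
  · push Not at hP
    refine ListCochain.cupCoboundary_eq_zero_of_const (e i).2 (c := 1) fun b hb => ?_
    rw [hf, if_neg (hP b hb)]

/-! ### The Poincaré–Miranda theorem -/

section PoincareMiranda

variable {ι : Type*}

lemma dist_min_div_le {a b : ℕ} {m : ℝ} (hm : 0 < m) (hab : a ≤ b) (hba : b ≤ a + 1) :
    dist (min (b / m) 1) (min (a / m) 1) ≤ 1 / m := by
  have hab' : (a : ℝ) ≤ b := mod_cast hab
  have hba' : (b : ℝ) ≤ a + 1 := mod_cast hba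
  calc dist (min (b / m) 1) (min (a / m) 1)
      ≤ max |b / m - a / m| |1 - 1| := abs_min_sub_min_le_max _ _ _ _
    _ = (b - a) / m := by
      rw [sub_self, abs_zero, max_eq_left (abs_nonneg _), ← sub_div,
        abs_of_nonneg (div_nonneg (sub_nonneg.2 hab') hm.le)]
    _ ≤ 1 / m := by gcongr; linarith

lemma exists_near_nonneg_and_near_nonpos [Fintype ι] {F : (ι → ℝ) → ι → ℝ}
    (h0 : ∀ x ∈ Set.Icc (0 : ι → ℝ) 1, ∀ i, x i = 0 → 0 ≤ F x i)
    (h1 : ∀ x ∈ Set.Icc (0 : ι → ℝ) 1, ∀ i, x i = 1 → F x i ≤ 0) (n : ℕ) :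
    ∃ x ∈ Set.Icc (0 : ι → ℝ) 1, ∀ i,
      (∃ a ∈ Set.Icc (0 : ι → ℝ) 1, dist a x ≤ 1 / (n + 1 : ℝ) ∧ 0 ≤ F a i) ∧
        ∃ b ∈ Set.Icc (0 : ι → ℝ) 1, dist b x ≤ 1 / (n + 1 : ℝ) ∧ F b i ≤ 0 := by
  have hn : (0 : ℝ) < n + 1 := by positivity
  let point (a : ι → ℕ) (i : ι) : ℝ := min (a i / (n + 1)) 1
  have hmem : ∀ a, point a ∈ Set.Icc (0 : ι → ℝ) 1 := fun a =>
    ⟨fun i => le_min (by positivity) zero_le_one, fun i => min_le_right _ _⟩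
  have hdist : ∀ a c, a ∈ Set.Icc c (c + 1) → dist (point a) (point c) ≤ 1 / (n + 1 : ℝ) :=
    fun a c hac => (dist_pi_le_iff (by positivity)).2 fun i =>
      dist_min_div_le hn (hac.1 i) (hac.2 i)
  obtain ⟨c, hc⟩ := exists_cell_forall_exists_and_exists_not (N := n + 1)
    (P := fun i a => a i = 0 ∨ a i < n + 1 ∧ 0 < F (point a) i)
    (fun i x hx => .inl hx) (fun i x hx => by omega)
  refine ⟨point c, hmem c, fun i => ?_⟩
  obtain ⟨⟨a, hac, ha⟩, b, hbc, hb⟩ := hc i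
  refine ⟨⟨point a, hmem a, hdist a c hac, ?_⟩, point b, hmem b, hdist b c hbc, ?_⟩
  · exact ha.elim (fun ha => h0 _ (hmem a) i (by simp [point, ha])) fun ha => ha.2.le
  · push Not at hb
    rcases lt_or_ge (b i) (n + 1) with hlt | hge
    · exact hb.2 hlt
    · refine h1 _ (hmem b) i (min_eq_right ((one_le_div hn).2 ?_))
      exact_mod_cast hge

theorem poincare_miranda_zero_one [Finite ι] {F : (ι → ℝ) → ι → ℝ}
    (hF : ContinuousOn F (Set.Icc 0 1))
    (h0 : ∀ x ∈ Set.Icc (0 : ι → ℝ) 1, ∀ i, x i = 0 → 0 ≤ F x i)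
    (h1 : ∀ x ∈ Set.Icc (0 : ι → ℝ) 1, ∀ i, x i = 1 → F x i ≤ 0) :
    ∃ x ∈ Set.Icc (0 : ι → ℝ) 1, F x = 0 := by
  cases nonempty_fintype ι
  choose x hx hnear using exists_near_nonneg_and_near_nonpos h0 h1
  obtain ⟨y, hy, φ, hφ, hlim⟩ := isCompact_Icc.tendsto_subseq hx
  have hmesh : Filter.Tendsto (fun n => 1 / (φ n + 1 : ℝ)) Filter.atTop (nhds 0) :=
    tendsto_one_div_add_atTop_nhds_zero_nat.comp hφ.tendsto_atTop
  have htendsto : ∀ u : ℕ → ι → ℝ, (∀ n, u n ∈ Set.Icc (0 : ι → ℝ) 1) →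
      (∀ n, dist (u n) (x (φ n)) ≤ 1 / (φ n + 1 : ℝ)) → ∀ i,
      Filter.Tendsto (fun n => F (u n) i) Filter.atTop (nhds (F y i)) := by
    intro u hu hux i
    have huy : Filter.Tendsto u Filter.atTop (nhds y) := by
      refine hlim.congr_dist (squeeze_zero (fun _ => dist_nonneg) (fun n => ?_) hmesh)
      rw [dist_comm]
      exact hux n
    exact tendsto_pi_nhds.1 ((hF y hy).tendsto.comp
      (tendsto_nhdsWithin_iff.2 ⟨huy, .of_forall hu⟩)) i
  refine ⟨y, hy, funext fun i => le_antisymm ?_ ?_⟩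
  · choose b hb hbx hFb using fun n => (hnear (φ n) i).2
    exact le_of_tendsto' (htendsto b hb hbx i) hFb
  · choose a ha hax hFa using fun n => (hnear (φ n) i).1
    exact ge_of_tendsto' (htendsto a ha hax i) hFa

theorem poincare_miranda [Finite ι] {l r s : ι → ℝ} {F : (ι → ℝ) → ι → ℝ} (hlr : l ≤ r)
    (hs : ∀ i, s i ≠ 0) (hF : ContinuousOn F (Set.Icc l r))
    (hl : ∀ x ∈ Set.Icc l r, ∀ i, x i = l i → 0 ≤ s i * F x i)
    (hr : ∀ x ∈ Set.Icc l r, ∀ i, x i = r i → s i * F x i ≤ 0) :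
    ∃ x ∈ Set.Icc l r, F x = 0 := by
  let scale (t : ι → ℝ) : ι → ℝ := l + t * (r - l)
  have hscale : ∀ t ∈ Set.Icc (0 : ι → ℝ) 1, scale t ∈ Set.Icc l r := by
    refine fun t ht => ⟨le_add_of_nonneg_right (mul_nonneg ht.1 (sub_nonneg.2 hlr)), ?_⟩
    calc l + t * (r - l) ≤ l + 1 * (r - l) := by
          gcongr
          exact ht.2
      _ = r := by ring
  have hcont : ContinuousOn (fun t => s * F (scale t)) (Set.Icc 0 1) :=
    continuousOn_const.mul (hF.comp (by fun_prop) hscale)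
  obtain ⟨t, ht, hzero⟩ := poincare_miranda_zero_one hcont
    (fun t ht i hti => hl _ (hscale t ht) i (by simp [scale, hti]))
    (fun t ht i hti => hr _ (hscale t ht) i (by simp [scale, hti]))
  exact ⟨scale t, hscale t ht,
    funext fun i => (mul_eq_zero.1 (congrFun hzero i)).resolve_left (hs i)⟩

end PoincareMiranda

/-! ### Measure of perturbed zero sets -/

section HausdorffMeasure

lemma one_le_hausdorffMeasure_of_forall_exists_eqOn {ι : Type*} [Fintype ι] (I : Finset ι)
    {S : Set (EuclideanSpace ℝ ι)}
    (h : ∀ z ∈ Set.Icc (0 : ι → ℝ) 1, ∃ x ∈ S, ∀ i ∈ I, x i = z i) : 1 ≤ μH[(I.card : ℝ)] S := by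
  classical
  let proj (x : EuclideanSpace ℝ ι) (i : I) : ℝ := x i
  have hproj : LipschitzWith 1 proj := LipschitzWith.of_dist_le_mul fun x y => by
    rw [NNReal.coe_one, one_mul, dist_pi_le_iff dist_nonneg, dist_eq_norm]
    exact fun i => PiLp.norm_apply_le (x - y) i
  have hcube : Set.Icc (0 : I → ℝ) 1 ⊆ proj '' S := by
    intro z hz
    let w (i : ι) : ℝ := if hi : i ∈ I then z ⟨i, hi⟩ else 0
    have hw : w ∈ Set.Icc 0 1 := by
      refine ⟨fun i => ?_, fun i => ?_⟩ <;> by_cases hi : i ∈ I <;>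
        simp only [w, hi, ↓reduceDIte, Pi.zero_apply, Pi.one_apply, le_refl, zero_le_one]
      exacts [hz.1 ⟨i, hi⟩, hz.2 ⟨i, hi⟩]
    obtain ⟨x, hxS, hx⟩ := h w hw
    exact ⟨x, hxS, funext fun i => (hx i i.2).trans (by simp [w])⟩
  calc (1 : ℝ≥0∞) = volume (Set.Icc (0 : I → ℝ) 1) := by simp [Real.volume_Icc_pi]
    _ = μH[(I.card : ℝ)] (Set.Icc (0 : I → ℝ) 1) := by
      rw [← hausdorffMeasure_pi_real, Fintype.card_coe]
    _ ≤ μH[(I.card : ℝ)] (proj '' S) := measure_mono hcube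
    _ ≤ μH[(I.card : ℝ)] S := by
      simpa using hproj.hausdorffMeasure_image_le (d := (I.card : ℝ)) (by positivity) S

variable {d : ℕ} {κ : Type*}

lemma isClosed_unitCube : IsClosed (unitCube d) := by
  simp only [unitCube, Set.ofPred_forall]
  exact isClosed_iInter fun i => isClosed_Icc.preimage (PiLp.continuous_apply 2 _ i)

lemma exists_zero_mem_box [Finite κ] (e : κ ↪ Fin d) {H : EuclideanSpace ℝ (Fin d) → κ → ℝ}
    (hH : ContinuousOn H (unitCube d)) {l r s : κ → ℝ} (hl : ∀ q, 0 ≤ l q) (hlr : l ≤ r)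
    (hr : ∀ q, r q ≤ 1) (hs : ∀ q, s q ≠ 0)
    (hHl : ∀ x ∈ unitCube d, ∀ q, x (e q) = l q → 0 ≤ s q * H x q)
    (hHr : ∀ x ∈ unitCube d, ∀ q, x (e q) = r q → s q * H x q ≤ 0)
    {z : Fin d → ℝ} (hz : z ∈ Set.Icc 0 1) :
    ∃ x ∈ unitCube d, H x = 0 ∧ (∀ q, x (e q) ∈ Set.Icc (l q) (r q)) ∧
      ∀ i ∉ Set.range e, x i = z i := by
  let fill (u : κ → ℝ) : EuclideanSpace ℝ (Fin d) := WithLp.toLp 2 (Function.extend e u z)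
  have hfill_range : ∀ u q, fill u (e q) = u q := fun u q => e.injective.extend_apply u z q
  have hfill_compl : ∀ u, ∀ i ∉ Set.range e, fill u i = z i := fun u i hi =>
    Function.extend_apply' u z i hi
  have hfill_cont : Continuous fill := by
    refine (PiLp.continuous_toLp 2 _).comp (continuous_pi fun i => ?_)
    by_cases hi : i ∈ Set.range e
    · obtain ⟨q, rfl⟩ := hi
      simpa only [e.injective.extend_apply] using continuous_apply q
    · simpa only [Function.extend_apply' _ _ _ hi] using continuous_const
  have hfill_mem : ∀ u ∈ Set.Icc l r, fill u ∈ unitCube d := by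
    intro u hu i
    by_cases hi : i ∈ Set.range e
    · obtain ⟨q, rfl⟩ := hi
      rw [hfill_range]
      exact ⟨(hl q).trans (hu.1 q), (hu.2 q).trans (hr q)⟩
    · rw [hfill_compl u i hi]
      exact ⟨hz.1 i, hz.2 i⟩
  obtain ⟨u, hu, hzero⟩ := poincare_miranda hlr hs (hH.comp hfill_cont.continuousOn hfill_mem)
    (fun u hu q huq => hHl _ (hfill_mem u hu) q ((hfill_range u q).trans huq))
    (fun u hu q huq => hHr _ (hfill_mem u hu) q ((hfill_range u q).trans huq))
  refine ⟨fill u, hfill_mem u hu, hzero, fun q => ?_, hfill_compl u⟩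
  rw [hfill_range]
  exact ⟨hu.1 q, hu.2 q⟩

lemma one_le_hausdorffMeasure_zeros_inter_box [Fintype κ] (e : κ ↪ Fin d)
    {H : EuclideanSpace ℝ (Fin d) → κ → ℝ} (hH : ContinuousOn H (unitCube d))
    {l r s : κ → ℝ} (hl : ∀ q, 0 ≤ l q) (hlr : l ≤ r) (hr : ∀ q, r q ≤ 1) (hs : ∀ q, s q ≠ 0)
    (hHl : ∀ x ∈ unitCube d, ∀ q, x (e q) = l q → 0 ≤ s q * H x q)
    (hHr : ∀ x ∈ unitCube d, ∀ q, x (e q) = r q → s q * H x q ≤ 0) :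
    1 ≤ μH[(d : ℝ) - Fintype.card κ]
      ({x ∈ unitCube d | H x = 0} ∩ {x | ∀ q, x (e q) ∈ Set.Icc (l q) (r q)}) := by
  classical
  have hdim : (d : ℝ) - Fintype.card κ = ((Finset.univ.map e)ᶜ.card : ℝ) := by
    have hle := Fintype.card_le_of_embedding e
    rw [Fintype.card_fin] at hle
    rw [Finset.card_compl, Finset.card_map, Finset.card_univ, Fintype.card_fin, Nat.cast_sub hle]
  rw [hdim]
  refine one_le_hausdorffMeasure_of_forall_exists_eqOn _ fun z hz => ?_
  obtain ⟨x, hx, hzero, hbox, hxz⟩ := exists_zero_mem_box e hH hl hlr hr hs hHl hHr hz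
  exact ⟨x, ⟨⟨hx, hzero⟩, hbox⟩, fun i hi => hxz i (by simpa using hi)⟩

end HausdorffMeasure

/-- Pairwise disjoint subintervals `[left i, right i]` of `[0, 1]` across each of which `g` changes
from one side of the strip `(-a, a)` to the other, with `sign i = ±1` giving the direction. Every
function within distance `a` of `g` still changes sign across each interval. -/
structure CrossingFamily (g : ℝ → ℝ) (K : Type*) (a : ℝ) where
  left : K → ℝ
  right : K → ℝ
  sign : K → ℝ
  left_nonneg : ∀ i, 0 ≤ left i
  left_le_right : ∀ i, left i ≤ right i
  right_le_one : ∀ i, right i ≤ 1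
  abs_sign : ∀ i, |sign i| = 1
  le_left : ∀ i, a ≤ sign i * g (left i)
  right_le : ∀ i, sign i * g (right i) ≤ -a
  disjoint : Pairwise (Function.onFun Disjoint fun i => Set.Icc (left i) (right i))

namespace CrossingFamily

variable {g : ℝ → ℝ} {K κ : Type*} {a y : ℝ} {d : ℕ}

lemma abs_sign_mul_sub (c : CrossingFamily g K a) (i : K) (t : ℝ) :
    |c.sign i * y - c.sign i * g t| = |y - g t| := by
  rw [← mul_sub, abs_mul, c.abs_sign, one_mul]

lemma nonneg_left (c : CrossingFamily g K a) {i : K} (h : |y - g (c.left i)| ≤ a) :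
    0 ≤ c.sign i * y := by
  rw [← c.abs_sign_mul_sub i] at h
  linarith [c.le_left i, (abs_le.1 h).1]

lemma right_nonpos (c : CrossingFamily g K a) {i : K} (h : |y - g (c.right i)| ≤ a) :
    c.sign i * y ≤ 0 := by
  rw [← c.abs_sign_mul_sub i] at h
  linarith [c.right_le i, (abs_le.1 h).2]

/-- The points whose coordinate `e q` lies in the interval number `ν q`, for every `q`. -/
def box (c : CrossingFamily g K a) (e : κ → Fin d) (ν : κ → K) : Set (EuclideanSpace ℝ (Fin d)) :=
  {x | ∀ q, x (e q) ∈ Set.Icc (c.left (ν q)) (c.right (ν q))}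

lemma isClosed_box (c : CrossingFamily g K a) (e : κ → Fin d) (ν : κ → K) :
    IsClosed (c.box e ν) := by
  simp only [box, Set.ofPred_forall]
  exact isClosed_iInter fun q => isClosed_Icc.preimage (PiLp.continuous_apply 2 _ (e q))

lemma pairwise_disjoint_box (c : CrossingFamily g K a) (e : κ → Fin d) :
    Pairwise (Function.onFun Disjoint (c.box e)) := by
  intro ν ν' hne
  obtain ⟨q, hq⟩ := Function.ne_iff.1 hne
  exact Set.disjoint_left.2 fun x hx hx' => Set.disjoint_left.1 (c.disjoint hq) (hx q) (hx' q)

theorem card_pow_le_hausdorffMeasure_zeros [Fintype K] [Fintype κ] (c : CrossingFamily g K a)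
    (e : κ ↪ Fin d) {H : EuclideanSpace ℝ (Fin d) → κ → ℝ} (hH : ContinuousOn H (unitCube d))
    (hHg : ∀ x ∈ unitCube d, ∀ q, |H x q - g (x (e q))| ≤ a) :
    (Fintype.card K : ℝ≥0∞) ^ Fintype.card κ ≤
      μH[(d : ℝ) - Fintype.card κ] {x ∈ unitCube d | H x = 0} := by
  classical
  set Z := {x ∈ unitCube d | H x = 0}
  have hZ : IsClosed Z := hH.preimage_isClosed_of_isClosed isClosed_unitCube isClosed_singleton
  have hbox : ∀ ν : κ → K, 1 ≤ μH[(d : ℝ) - Fintype.card κ] (Z ∩ c.box e ν) := fun ν =>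
    one_le_hausdorffMeasure_zeros_inter_box e hH (s := fun q => c.sign (ν q))
      (fun q => c.left_nonneg (ν q)) (fun q => c.left_le_right (ν q))
      (fun q => c.right_le_one (ν q)) (fun q => abs_ne_zero.1 (by simp [c.abs_sign]))
      (fun x hx q hxq => c.nonneg_left (hxq ▸ hHg x hx q))
      (fun x hx q hxq => c.right_nonpos (hxq ▸ hHg x hx q))
  calc (Fintype.card K : ℝ≥0∞) ^ Fintype.card κ
      = ∑ _ν : κ → K, (1 : ℝ≥0∞) := by simp
    _ ≤ ∑ ν, μH[(d : ℝ) - Fintype.card κ] (Z ∩ c.box e ν) := Finset.sum_le_sum fun ν _ => hbox ν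
    _ = μH[(d : ℝ) - Fintype.card κ] (⋃ ν, Z ∩ c.box e ν) := by
      rw [measure_iUnion _ fun ν => (hZ.inter (c.isClosed_box e ν)).measurableSet, tsum_fintype]
      exact fun ν ν' hne => (c.pairwise_disjoint_box e hne).mono Set.inter_subset_right
        Set.inter_subset_right
    _ ≤ μH[(d : ℝ) - Fintype.card κ] Z :=
      measure_mono (Set.iUnion_subset fun ν => Set.inter_subset_left)

end CrossingFamily

/-! ### Moduli of continuity -/

lemma Psi_nonneg (β : ℝ → ℝ) (s : ℝ) : 0 ≤ Psi β s :=
  Real.sSup_nonneg fun _ hδ => hδ.1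

lemma lt_apply_of_Psi_lt {β : ℝ → ℝ} {s δ : ℝ} (hpos : 0 < Psi β s) (hδ : Psi β s < δ) :
    s < β δ := by
  -- The supremum of an unbounded set is the junk value `0`, so positivity entails boundedness.
  have hbdd : BddAbove {δ : ℝ | 0 ≤ δ ∧ β δ ≤ s} :=
    not_imp_comm.1 Real.sSup_of_not_bddAbove hpos.ne'
  exact lt_of_not_ge fun hle => hδ.not_ge (le_csSup hbdd ⟨(hpos.trans hδ).le, hle⟩)

namespace IsModulus

variable {β : ℝ → ℝ}

lemma nonneg (hβ : IsModulus β) {s : ℝ} (hs : 0 ≤ s) : 0 ≤ β s :=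
  hβ.1 s hs

lemma apply_le_apply (hβ : IsModulus β) {s t : ℝ} (hs : 0 ≤ s) (hst : s ≤ t) : β s ≤ β t :=
  hβ.2.1 hs (hs.trans hst) hst

lemma apply_le_add (hβ : IsModulus β) {r s t : ℝ} (hr : 0 ≤ r) (hs : 0 ≤ s) (ht : 0 ≤ t)
    (h : r ≤ s + t) : β r ≤ β s + β t :=
  (hβ.apply_le_apply hr h).trans (hβ.2.2.1 s t hs ht)

lemma apply_zero (hβ : IsModulus β) : β 0 = 0 :=
  hβ.2.2.2.1

lemma continuousWithinAt (hβ : IsModulus β) : ContinuousWithinAt β (Set.Ici 0) 0 := by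
  rw [← continuousWithinAt_Ioi_iff_Ici, ContinuousWithinAt, hβ.apply_zero]
  exact hβ.2.2.2.2

lemma div_const (hβ : IsModulus β) {c : ℝ} (hc : 0 ≤ c) : IsModulus fun s => β s / c := by
  refine ⟨fun s hs => div_nonneg (hβ.nonneg hs) hc, fun s hs t _ hst => ?_, fun s t hs ht => ?_,
    by simp [hβ.apply_zero], by simpa using hβ.2.2.2.2.div_const c⟩
  · exact div_le_div_of_nonneg_right (hβ.apply_le_apply hs hst) hc
  · rw [← add_div]
    exact div_le_div_of_nonneg_right (hβ.2.2.1 s t hs ht) hc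

theorem continuous {X Y : Type*} [PseudoMetricSpace X] [PseudoMetricSpace Y] (hβ : IsModulus β)
    {f : X → Y} (hf : ∀ x y, dist (f x) (f y) ≤ β (dist x y)) : Continuous f := by
  refine continuous_iff_continuousAt.2 fun y => tendsto_iff_dist_tendsto_zero.2 ?_
  refine squeeze_zero (fun _ => dist_nonneg) (fun x => hf x y) ?_
  have hdist : Filter.Tendsto (fun x => dist x y) (nhds y) (nhdsWithin 0 (Set.Ici 0)) :=
    tendsto_nhdsWithin_iff.2
      ⟨tendsto_iff_dist_tendsto_zero.1 Filter.tendsto_id, .of_forall fun _ => dist_nonneg⟩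
  simpa only [hβ.apply_zero, Function.comp_def] using hβ.continuousWithinAt.tendsto.comp hdist

theorem exists_extension {X S : Type*} [PseudoMetricSpace X] (hβ : IsModulus β) (pos : S → X)
    (v : S → ℝ) (hv : ∀ s t, v s - v t ≤ β (dist (pos s) (pos t))) :
    ∃ g : X → ℝ, (∀ x y, |g x - g y| ≤ β (dist x y)) ∧ ∀ s, g (pos s) = v s := by
  cases isEmpty_or_nonempty S
  · exact ⟨0, fun x y => by simpa using hβ.nonneg dist_nonneg, isEmptyElim⟩
  have htriangle : ∀ x y z : X, β (dist x z) ≤ β (dist x y) + β (dist y z) := fun x y z =>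
    hβ.apply_le_add dist_nonneg dist_nonneg dist_nonneg (dist_triangle x y z)
  have hbdd : ∀ x, BddBelow (Set.range fun s => v s + β (dist x (pos s))) := by
    obtain ⟨t⟩ := ‹Nonempty S›
    refine fun x => ⟨v t - β (dist (pos t) x), ?_⟩
    rintro _ ⟨s, rfl⟩
    linarith [hv t s, htriangle (pos t) x (pos s)]
  -- McShane's extension formula
  let g (x : X) : ℝ := ⨅ s, (v s + β (dist x (pos s)))
  have hle : ∀ x y, g x - g y ≤ β (dist x y) := by
    refine fun x y => sub_le_comm.1 (le_ciInf fun s => ?_)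
    linarith [ciInf_le (hbdd x) s, htriangle x y (pos s)]
  refine ⟨g, fun x y => abs_sub_le_iff.2 ⟨hle x y, dist_comm x y ▸ hle y x⟩, fun s => ?_⟩
  refine le_antisymm ?_ (le_ciInf fun t => by linarith [hv s t])
  simpa [hβ.apply_zero] using ciInf_le (hbdd (pos s)) s

end IsModulus

section CoordinateMap

variable {ι ι' κ : Type*}

/-- The map between Euclidean spaces whose coordinate number `f q` is `g` of the coordinate number
`e q`, and whose coordinates outside the range of `f` vanish. -/
def coordinateMap (e : κ → ι) (f : κ → ι') (g : ℝ → ℝ) (x : EuclideanSpace ℝ ι) :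
    EuclideanSpace ℝ ι' :=
  WithLp.toLp 2 (Function.extend f (fun q => g (x (e q))) 0)

lemma coordinateMap_apply {f : κ → ι'} (hf : f.Injective) (e : κ → ι) (g : ℝ → ℝ)
    (x : EuclideanSpace ℝ ι) (q : κ) : coordinateMap e f g x (f q) = g (x (e q)) :=
  hf.extend_apply (fun q => g (x (e q))) 0 q

lemma coordinateMap_apply_of_notMem_range {f : κ → ι'} {i : ι'} (hi : i ∉ Set.range f) (e : κ → ι)
    (g : ℝ → ℝ) (x : EuclideanSpace ℝ ι) : coordinateMap e f g x i = 0 :=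
  Function.extend_apply' (fun q => g (x (e q))) (0 : ι' → ℝ) i hi

lemma dist_coordinateMap_le [Fintype ι] [Fintype ι'] [Fintype κ] {β : ℝ → ℝ} (hβ : IsModulus β)
    {g : ℝ → ℝ} (hg : ∀ s t, |g s - g t| ≤ β (dist s t)) (e : κ → ι) {f : κ → ι'}
    (hf : f.Injective) (x y : EuclideanSpace ℝ ι) :
    dist (coordinateMap e f g x) (coordinateMap e f g y) ≤
      √(Fintype.card κ) * β (dist x y) := by
  have hcoord : ∀ q, |g (x (e q)) - g (y (e q))| ≤ β (dist x y) := by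
    refine fun q => (hg _ _).trans (hβ.apply_le_apply dist_nonneg ?_)
    rw [dist_eq_norm, dist_eq_norm]
    exact PiLp.norm_apply_le (x - y) (e q)
  have hsum : ∑ q, (g (x (e q)) - g (y (e q))) ^ 2 =
      ∑ i, dist (coordinateMap e f g x i) (coordinateMap e f g y i) ^ 2 := by
    refine Fintype.sum_of_injective f hf _ _ (fun i hi => ?_) fun q => ?_
    · simp [coordinateMap_apply_of_notMem_range hi]
    · simp [coordinateMap_apply hf, Real.dist_eq]
  rw [EuclideanSpace.dist_eq, ← hsum]
  calc √(∑ q, (g (x (e q)) - g (y (e q))) ^ 2)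
      ≤ √(∑ _q : κ, β (dist x y) ^ 2) := by
        refine Real.sqrt_le_sqrt (Finset.sum_le_sum fun q _ => sq_le_sq' ?_ ?_)
        · exact (abs_le.1 (hcoord q)).1
        · exact (abs_le.1 (hcoord q)).2
    _ = √(Fintype.card κ) * β (dist x y) := by
      rw [Finset.sum_const, Finset.card_univ, nsmul_eq_mul, Real.sqrt_mul (Nat.cast_nonneg _),
        Real.sqrt_sq (hβ.nonneg dist_nonneg)]

theorem CrossingFamily.card_pow_le_NW {K : Type*} [Fintype K] [Fintype κ] {d m p : ℕ}
    {g : ℝ → ℝ} {a ε r₀ : ℝ} (c : CrossingFamily g K a) (e : κ ↪ Fin d) {f : κ ↪ Fin m}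
    (hf : ∀ i : Fin m, i ∈ Set.range f ↔ p ≤ (i : ℕ)) (hεa : ε ≤ a) (hεr : ε ≤ r₀) :
    (Fintype.card K : ℝ≥0∞) ^ Fintype.card κ ≤
      NW d m (d - Fintype.card κ) (boxSlice m p r₀) (coordinateMap e f g) ε := by
  refine le_iInf₂ fun h hh => le_iInf fun hdist => ?_
  have hcoord : ∀ x ∈ unitCube d, ∀ i, |h x i - coordinateMap e f g x i| ≤ ε := by
    refine fun x hx i => le_trans ?_ (hdist x hx)
    rw [dist_eq_norm]
    exact PiLp.norm_apply_le (h x - coordinateMap e f g x) i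
  have hcont : ContinuousOn (fun x q => h x (f q)) (unitCube d) :=
    continuousOn_pi.2 fun q => (PiLp.continuous_apply 2 _ (f q)).comp_continuousOn hh
  refine (c.card_pow_le_hausdorffMeasure_zeros e hcont fun x hx q => ?_).trans (measure_mono ?_)
  · rw [← coordinateMap_apply f.injective e g]
    exact (hcoord x hx (f q)).trans hεa
  · rintro x ⟨hx, hzero⟩
    refine ⟨hx, fun i => ⟨fun hi => ?_, fun hi => ?_⟩⟩
    · have hxi := hcoord x hx i
      rw [coordinateMap_apply_of_notMem_range (fun hir => hi.not_ge ((hf i).1 hir)),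
        sub_zero] at hxi
      exact hxi.trans hεr
    · obtain ⟨q, rfl⟩ := (hf i).2 hi
      exact congrFun hzero q

end CoordinateMap

/-! ### Oscillation at all scales -/

/-- Consecutive blocks in `[0, 1]`: block `j` begins at `start j` and has room for `count j`
intervals of length `width j` with gaps `width j / 4` between them, followed by an empty piece
longer than `width j`. -/
structure BlockLayout where
  count : ℕ → ℕ
  width : ℕ → ℝ
  start : ℕ → ℝ
  width_pos : ∀ j, 0 < width j
  width_antitone : Antitone width
  start_zero_nonneg : 0 ≤ start 0
  start_le_one : ∀ j, start j ≤ 1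
  start_add_le : ∀ j, start j + 5 / 4 * (count j + 1) * width j ≤ start (j + 1)

namespace BlockLayout

variable (L : BlockLayout)

/-- The endpoints of the intervals of a layout: `⟨j, i, 0⟩` is the left and `⟨j, i, 1⟩` the right
endpoint of interval number `i` of block `j`. -/
abbrev Node : Type := Σ j, Fin (L.count j) × Fin 2

variable {L}

/-- The place of a node on the real line. -/
def position (x : L.Node) : ℝ :=
  L.start x.1 + (5 / 4 * x.2.1 + x.2.2 : ℝ) * L.width x.1

/-- The number of intervals of the block passed before reaching the node. The right endpoint of an
interval and the left endpoint of the next one have equal rank. -/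
def rank (x : L.Node) : ℕ :=
  x.2.1 + x.2.2

lemma start_monotone : Monotone L.start :=
  monotone_nat_of_le_succ fun j => le_trans
    (le_add_of_nonneg_right (mul_nonneg (by positivity) (L.width_pos j).le)) (L.start_add_le j)

lemma start_le_position (x : L.Node) : L.start x.1 ≤ position x :=
  le_add_of_nonneg_right (mul_nonneg (by positivity) (L.width_pos x.1).le)

lemma position_nonneg (x : L.Node) : 0 ≤ position x :=
  L.start_zero_nonneg.trans ((start_monotone x.1.zero_le).trans (start_le_position x))

lemma cast_side_le_one (x : L.Node) : (x.2.2 : ℝ) ≤ 1 :=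
  mod_cast Nat.lt_succ_iff.1 x.2.2.isLt

lemma position_add_width_le_start (x : L.Node) :
    position x + L.width x.1 ≤ L.start (x.1 + 1) := by
  have hindex : (x.2.1 : ℝ) + 1 ≤ L.count x.1 := mod_cast x.2.1.isLt
  have hside := cast_side_le_one x
  calc position x + L.width x.1
      = L.start x.1 + (5 / 4 * x.2.1 + x.2.2 + 1) * L.width x.1 := by rw [position]; ring
    _ ≤ L.start x.1 + 5 / 4 * (L.count x.1 + 1) * L.width x.1 := by
      gcongr
      · exact (L.width_pos x.1).le
      · linarith
    _ ≤ L.start (x.1 + 1) := L.start_add_le x.1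

lemma position_le_one (x : L.Node) : position x ≤ 1 :=
  (le_add_of_nonneg_right (L.width_pos x.1).le).trans
    ((position_add_width_le_start x).trans (L.start_le_one _))

lemma position_add_width_le_position_of_lt {x y : L.Node} (h : x.1 < y.1) :
    position x + L.width x.1 ≤ position y :=
  (position_add_width_le_start x).trans ((start_monotone h).trans (start_le_position y))

lemma position_add_width_le_position_of_rank_lt {j : ℕ} {u v : Fin (L.count j) × Fin 2}
    (h : rank (L := L) ⟨j, u⟩ < rank (L := L) ⟨j, v⟩) :
    position (L := L) ⟨j, u⟩ + L.width j ≤ position (L := L) ⟨j, v⟩ := by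
  have hrank : (u.1 + u.2 + 1 : ℝ) ≤ v.1 + v.2 := mod_cast h
  have hside := cast_side_le_one (L := L) ⟨j, v⟩
  calc position (L := L) ⟨j, u⟩ + L.width j
      = L.start j + (5 / 4 * u.1 + u.2 + 1) * L.width j := by rw [position]; ring
    _ ≤ L.start j + (5 / 4 * v.1 + v.2) * L.width j := by
      gcongr L.start j + ?_ * L.width j
      · exact (L.width_pos j).le
      · linarith [(Nat.cast_nonneg (u.2 : ℕ) : (0 : ℝ) ≤ (u.2 : ℕ))]

lemma width_le_dist_position {x y : L.Node} (h : x.1 = y.1 → rank x ≠ rank y) :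
    L.width x.1 ≤ dist (position x) (position y) ∧
      L.width y.1 ≤ dist (position x) (position y) := by
  have hkey : ∀ {x y : L.Node}, x.1 ≤ y.1 → position x + L.width x.1 ≤ position y →
      L.width x.1 ≤ dist (position x) (position y) ∧
        L.width y.1 ≤ dist (position x) (position y) := by
    intro x y hxy hpos
    have hle : L.width x.1 ≤ dist (position x) (position y) := by
      rw [Real.dist_eq, abs_sub_comm]
      exact le_trans (by linarith) (le_abs_self _)
    exact ⟨hle, (L.width_antitone hxy).trans hle⟩
  obtain ⟨j, u⟩ := x
  obtain ⟨j', v⟩ := y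
  rcases lt_trichotomy j j' with hjj | rfl | hjj
  · exact hkey hjj.le (position_add_width_le_position_of_lt hjj)
  · rcases lt_or_gt_of_ne (h rfl) with hrank | hrank
    · exact hkey le_rfl (position_add_width_le_position_of_rank_lt hrank)
    · rw [dist_comm, and_comm]
      exact hkey le_rfl (position_add_width_le_position_of_rank_lt hrank)
  · rw [dist_comm, and_comm]
    exact hkey hjj.le (position_add_width_le_position_of_lt hjj)

lemma right_lt_left {j : ℕ} {i i' : Fin (L.count j)} (h : i < i') :
    position (L := L) ⟨j, i, 1⟩ < position (L := L) ⟨j, i', 0⟩ := by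
  have hindex : (i + 1 : ℝ) ≤ i' := mod_cast h
  simp only [position]
  gcongr L.start j + ?_ * L.width j
  · exact L.width_pos j
  · norm_num
    linarith

/-- The value prescribed at a node: it alternates in sign as the rank increases. -/
def value (b : ℝ → ℝ) (x : L.Node) : ℝ :=
  (-1) ^ rank x * (b (L.width x.1) / 2)

lemma value_sub_value_le {b : ℝ → ℝ} (hb : IsModulus b) (x y : L.Node) :
    value b x - value b y ≤ b (dist (position x) (position y)) := by
  have habs : ∀ z : L.Node, |value b z| = b (L.width z.1) / 2 := fun z => by
    rw [value, abs_mul, abs_neg_one_pow, one_mul,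
      abs_of_nonneg (div_nonneg (hb.nonneg (L.width_pos z.1).le) zero_le_two)]
  by_cases h : x.1 = y.1 ∧ rank x = rank y
  · rw [value, value, h.1, h.2, sub_self]
    exact hb.nonneg dist_nonneg
  · obtain ⟨hx, hy⟩ := width_le_dist_position (not_and.1 h)
    have hbx := hb.apply_le_apply (L.width_pos x.1).le hx
    have hby := hb.apply_le_apply (L.width_pos y.1).le hy
    have hvx := le_abs_self (value b x)
    have hvy := neg_abs_le (value b y)
    rw [habs] at hvx hvy
    linarith

theorem exists_crossingFamily (L : BlockLayout) {b : ℝ → ℝ} (hb : IsModulus b) :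
    ∃ g : ℝ → ℝ, (∀ s t, |g s - g t| ≤ b (dist s t)) ∧
      ∀ j, Nonempty (CrossingFamily g (Fin (L.count j)) (b (L.width j) / 2)) := by
  obtain ⟨g, hg, hgv⟩ := hb.exists_extension (position (L := L)) (value b) (value_sub_value_le hb)
  have hsq : ∀ n : ℕ, ((-1 : ℝ) ^ n) * (-1) ^ n = 1 := fun n => by rw [← mul_pow]; simp
  refine ⟨g, hg, fun j => ⟨{
    left := fun i => position (L := L) ⟨j, i, 0⟩
    right := fun i => position (L := L) ⟨j, i, 1⟩
    sign := fun i => (-1) ^ (i : ℕ)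
    left_nonneg := fun i => position_nonneg _
    left_le_right := fun i => ?_
    right_le_one := fun i => position_le_one _
    abs_sign := fun i => by simp
    le_left := fun i => le_of_eq ?_
    right_le := fun i => le_of_eq ?_
    disjoint := (pairwise_disjoint_on _).2 fun i i' hii' => Set.disjoint_left.2 fun t ht ht' =>
      (right_lt_left hii').not_ge (ht'.1.trans ht.2) }⟩⟩
  · have := position_add_width_le_position_of_rank_lt (L := L) (u := (i, 0)) (v := (i, 1))
      (by simp [rank])
    linarith [L.width_pos j]
  · rw [hgv, value, ← mul_assoc]
    simp [rank, hsq]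
  · rw [hgv, value, ← mul_assoc]
    simp [rank, pow_succ, hsq]

end BlockLayout

section DyadicLayout

/-- The interval lengths of `dyadicLayout`. The first is the scale `2⁻⁵` of the theorem; the others
are the thresholds for `Ψ_β` below which the previous block has too few intervals. -/
def dyadicWidth : ℕ → ℝ
  | 0 => 1 / 32
  | j + 1 => (1 / 2) ^ ((j + 4) ^ 2)

lemma dyadicWidth_pos (j : ℕ) : 0 < dyadicWidth j := by
  cases j <;> simp [dyadicWidth]

lemma dyadicWidth_antitone : Antitone dyadicWidth := by
  refine antitone_nat_of_succ_le fun j => ?_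
  cases j with
  | zero => norm_num [dyadicWidth]
  | succ j => exact pow_le_pow_of_le_one (by norm_num) (by norm_num) (by gcongr; omega)

lemma two_pow_mul_dyadicWidth_le (j : ℕ) :
    2 ^ (j + 2) ^ 2 * dyadicWidth j ≤ 1 / 2 * (1 / 4) ^ j := by
  cases j with
  | zero => norm_num [dyadicWidth]
  | succ j =>
    calc (2 : ℝ) ^ (j + 1 + 2) ^ 2 * dyadicWidth (j + 1)
        = (2 * (1 / 2)) ^ (j + 3) ^ 2 * (1 / 2) ^ 5 * (1 / 4) ^ (j + 1) := by
          rw [dyadicWidth, show (j + 4) ^ 2 = (j + 3) ^ 2 + 5 + 2 * (j + 1) by ring, pow_add,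
            pow_add, pow_mul, mul_pow]
          norm_num [mul_assoc]
      _ ≤ 1 / 2 * (1 / 4) ^ (j + 1) := by gcongr; norm_num

/-- The layout with `2 ^ ((j + 2) ^ 2)` intervals of length `dyadicWidth j` in block `j`, which fits
into `[1 - 4 ^ (-j), 1 - 4 ^ (-(j + 1))]`. -/
def dyadicLayout : BlockLayout where
  count j := 2 ^ (j + 2) ^ 2
  width := dyadicWidth
  start j := 1 - (1 / 4) ^ j
  width_pos := dyadicWidth_pos
  width_antitone := dyadicWidth_antitone
  start_zero_nonneg := by simp
  start_le_one j := sub_le_self _ (by positivity)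
  start_add_le j := by
    have hcount : (2 : ℝ) ^ 4 ≤ 2 ^ (j + 2) ^ 2 :=
      pow_le_pow_right₀ one_le_two (Nat.pow_le_pow_left (Nat.le_add_left 2 j) 2)
    have hwidth := mul_le_mul_of_nonneg_right hcount (dyadicWidth_pos j).le
    have hpow : (0 : ℝ) < (1 / 4) ^ j := by positivity
    push_cast
    linarith [two_pow_mul_dyadicWidth_le j, pow_succ (1 / 4 : ℝ) j]

lemma sixteen_div_mul_two_rpow_le {P : ℝ} (hP : 0 < P) {j : ℕ}
    (h : (1 / 2 : ℝ) ^ (j + 4) ^ 2 ≤ P) :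
    16 / P * (2 : ℝ) ^ (-4 * √|Real.logb 2 P|) ≤ 2 ^ (j + 2) ^ 2 := by
  set t := -Real.logb 2 P with ht
  have hPt : P = 2 ^ (-t) := by rw [ht, neg_neg, Real.rpow_logb two_pos (by norm_num) hP]
  have htj : t ≤ (j + 4 : ℝ) ^ 2 := by
    have hlog := Real.logb_le_logb_of_le one_lt_two (by positivity) h
    rw [one_div, inv_pow, Real.logb_inv, Real.logb_pow, Real.logb_self_eq_one one_lt_two] at hlog
    push_cast at hlog
    linarith
  have hexp : 4 + t - 4 * √|t| ≤ (j + 2 : ℝ) ^ 2 := by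
    rcases lt_or_ge t 0 with hneg | hnonneg
    · nlinarith [Real.sqrt_nonneg |t|, (Nat.cast_nonneg j : (0 : ℝ) ≤ j)]
    · rw [abs_of_nonneg hnonneg]
      have hsqrt : √t ≤ j + 4 := Real.sqrt_le_iff.2 ⟨by positivity, htj⟩
      nlinarith [Real.sqrt_nonneg t, Real.sq_sqrt hnonneg, (Nat.cast_nonneg j : (0 : ℝ) ≤ j)]
  calc 16 / P * (2 : ℝ) ^ (-4 * √|Real.logb 2 P|)
      = 2 ^ (4 + t - 4 * √|t|) := by
        rw [← abs_neg (Real.logb 2 P), ← ht, hPt, show (16 : ℝ) = 2 ^ (4 : ℝ) by norm_num,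
          ← Real.rpow_sub two_pos, ← Real.rpow_add two_pos]
        ring_nf
    _ ≤ 2 ^ ((j + 2 : ℝ) ^ 2) := Real.rpow_le_rpow_of_exponent_le one_le_two hexp
    _ = 2 ^ (j + 2) ^ 2 := by
      rw [← Real.rpow_natCast 2 ((j + 2) ^ 2)]
      push_cast
      rfl

lemma exists_half_pow_le_Psi_and_le_apply_dyadicWidth {β : ℝ → ℝ} {s : ℝ} (hpos : 0 < Psi β s)
    (hs : s ≤ β (1 / 32)) :
    ∃ j : ℕ, (1 / 2 : ℝ) ^ (j + 4) ^ 2 ≤ Psi β s ∧ s ≤ β (dyadicWidth j) := by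
  classical
  have hex : ∃ j : ℕ, (1 / 2 : ℝ) ^ (j + 4) ^ 2 ≤ Psi β s := by
    obtain ⟨n, hn⟩ := exists_pow_lt_of_lt_one hpos (one_half_lt_one (α := ℝ))
    exact ⟨n, (pow_le_pow_of_le_one (by norm_num) (by norm_num) (by nlinarith)).trans hn.le⟩
  refine ⟨Nat.find hex, Nat.find_spec hex, ?_⟩
  cases hj : Nat.find hex with
  | zero => exact hs
  | succ j => exact (lt_apply_of_Psi_lt hpos (not_le.1 (Nat.find_min hex (by omega)))).le

theorem exists_le_apply_width_and_ofReal_le_count_pow {β : ℝ → ℝ} {s : ℝ} {k : ℕ} (hk : k ≠ 0)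
    (hs : s ≤ β (1 / 32)) :
    ∃ j, s ≤ β (dyadicLayout.width j) ∧
      ENNReal.ofReal ((16 / Psi β s) ^ k * 2 ^ (-(4 * (k : ℝ)) * √|Real.logb 2 (Psi β s)|)) ≤
        (dyadicLayout.count j : ℝ≥0∞) ^ k := by
  rcases (Psi_nonneg β s).eq_or_lt with hzero | hpos
  -- For `0 < s` the value `0` is the junk supremum of an unbounded set, and then `16 / 0 = 0`.
  · exact ⟨0, hs, by simp [← hzero, hk]⟩
  obtain ⟨j, hj, hsj⟩ := exists_half_pow_le_Psi_and_le_apply_dyadicWidth hpos hs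
  refine ⟨j, hsj, ENNReal.ofReal_le_of_le_toReal ?_⟩
  calc (16 / Psi β s) ^ k * (2 : ℝ) ^ (-(4 * (k : ℝ)) * √|Real.logb 2 (Psi β s)|)
      = (16 / Psi β s * (2 : ℝ) ^ (-4 * √|Real.logb 2 (Psi β s)|)) ^ k := by
        rw [mul_pow, ← Real.rpow_mul_natCast zero_le_two]
        ring_nf
    _ ≤ (2 ^ (j + 2) ^ 2) ^ k :=
      pow_le_pow_left₀ (by positivity) (sixteen_div_mul_two_rpow_le hpos hj) k
    _ = ((dyadicLayout.count j : ℝ≥0∞) ^ k).toReal := by simp [dyadicLayout]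

end DyadicLayout

/-- for `W = [-r₀,r₀]^p × {0}^{m-p}` and any modulus of continuity `β`,
there is a continuous `g : [0,1]^d → ℝ^m` admitting `β` as a modulus of continuity such
that for every `0 < ε ≤ min{(1/(2√(m-p)))·β(2⁻⁵), r₀}`,
`N^g_W(ε) ≥ (16/Ψ_β(2√(m-p) ε))^{m-p} · 2^{-4(m-p)·√|log₂ Ψ_β(2√(m-p) ε)|}`. -/
theorem stmt3 (d m p : ℕ) (hpm : p < m) (hmd : m ≤ p + d)
    (r₀ : ℝ) (hr₀ : 0 < r₀)
    (β : ℝ → ℝ) (hβ : IsModulus β) :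
    ∃ g : EuclideanSpace ℝ (Fin d) → EuclideanSpace ℝ (Fin m),
      ContinuousOn g (unitCube d) ∧
      (∀ x ∈ unitCube d, ∀ y ∈ unitCube d, dist (g x) (g y) ≤ β (dist x y)) ∧
      ∀ ε : ℝ, 0 < ε →
        ε ≤ min ((1 / (2 * Real.sqrt ((m : ℝ) - p))) * β (2 ^ (-5 : ℤ))) r₀ →
        ENNReal.ofReal ((16 / Psi β (2 * Real.sqrt ((m : ℝ) - p) * ε)) ^ (m - p) *
            2 ^ (-(4 * ((m : ℝ) - p)) *
              Real.sqrt |Real.logb 2 (Psi β (2 * Real.sqrt ((m : ℝ) - p) * ε))|))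
          ≤ NW d m ((d : ℝ) + p - m) (boxSlice m p r₀) g ε := by
  obtain ⟨k, rfl⟩ := Nat.exists_eq_add_of_le hpm.le
  have hk : k ≠ 0 := by omega
  have hkd : k ≤ d := by omega
  have hsqrt : 0 < √(k : ℝ) := Real.sqrt_pos.2 (by positivity)
  have hcodim : ((p + k : ℕ) : ℝ) - p = k := by push_cast; ring
  have hdim : (d : ℝ) + p - (p + k : ℕ) = d - Fintype.card (Fin k) := by
    rw [Fintype.card_fin, add_sub_assoc, ← neg_sub, hcodim, sub_eq_add_neg]
  obtain ⟨φ, hφ, hcross⟩ := dyadicLayout.exists_crossingFamily (hβ.div_const hsqrt.le)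
  let e : Fin k ↪ Fin d := Fin.castLEEmb hkd
  let f : Fin k ↪ Fin (p + k) := Fin.natAddEmb p
  have hmod (x y) : dist (coordinateMap e f φ x) (coordinateMap e f φ y) ≤ β (dist x y) := by
    simpa [mul_div_cancel₀ _ hsqrt.ne'] using
      dist_coordinateMap_le (hβ.div_const hsqrt.le) hφ e f.injective x y
  refine ⟨coordinateMap e f φ, (hβ.continuous hmod).continuousOn, fun x _ y _ => hmod x y, ?_⟩
  intro ε _ hε
  rw [hcodim, hdim, Nat.add_sub_cancel_left]
  rw [hcodim, le_min_iff, one_div_mul_eq_div, le_div_iff₀' (by positivity)] at hε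
  norm_num only at hε
  obtain ⟨j, hεj, hcount⟩ := exists_le_apply_width_and_ofReal_le_count_pow hk hε.1
  obtain ⟨c⟩ := hcross j
  have hεa : ε ≤ β (dyadicLayout.width j) / √k / 2 := by
    rw [div_div, le_div_iff₀ (by positivity)]; linarith
  have hf (i : Fin (p + k)) : i ∈ Set.range f ↔ p ≤ (i : ℕ) :=
    Set.ext_iff.1 (Fin.range_natAdd p k) i
  exact hcount.trans (by simpa using c.card_pow_le_NW e hf hεa hε.2)
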